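/- arXiv:2307.08948 — 6 statements merged into one kernel-verified Lean document; each statement's English description precedes it below -/
import Mathlib

section
/- Let I₁ and I₂ be maximal common independent sets of two matroids M₁ = (S, ℐ₁) and M₂ = (S, ℐ₂). Let M₁' = (M₁ | (I₁ ∪ I₂)) / (I₁ ∩ I₂) and M₂' = (M₂ | (I₁ ∪ I₂)) / (I₁ ∩ I₂). Then both I₁ \ I₂ and I₂ \ I₁ are maximal common independent sets of M₁' and M₂'. -/
/-- Deletion of `X` from the matroid `M`. -/
def Matroid.del {α : Type*} (M : Matroid α) (X : Set α) : Matroid α := M.restrict (M.E \ X)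

/-- Contraction of `X` from the matroid `M`, defined via duality. -/
def Matroid.con {α : Type*} (M : Matroid α) (X : Set α) : Matroid α := (M✶.del X)✶

theorem con_indep_aux {α : Type*} (M : Matroid α) {R I : Set α} (hI : M.Indep I) (hIR : I ⊆ R)
    (J : Set α) : ((M.restrict R).con I).Indep J ↔
      Disjoint J I ∧ M.Indep (J ∪ I) ∧ J ∪ I ⊆ R := by
  have h : (M.restrict R).con I = (M.restrict R).contract I := rfl
  have hI' : (M.restrict R).Indep I := Matroid.restrict_indep_iff.2 ⟨hI, hIR⟩
  rw [h, hI'.contract_indep_iff, Matroid.restrict_indep_iff]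

theorem half_aux {α : Type*} (M₁ M₂ : Matroid α) {I R C : Set α}
    (h : Maximal (fun T => M₁.Indep T ∧ M₂.Indep T) I) (hC : C ⊆ I) (hR : I ⊆ R) :
    Maximal (fun T => ((M₁.restrict R).con C).Indep T ∧
        ((M₂.restrict R).con C).Indep T) (I \ C) := by
  have a := h.prop
  have e : I \ C ∪ C = I := Set.sdiff_union_of_subset hC
  have key := fun J => con_indep_aux M₁ (a.1.subset hC) (hC.trans hR) J
  have key2 := fun J => con_indep_aux M₂ (a.2.subset hC) (hC.trans hR) J
  simp only [key, key2]
  refine ⟨⟨⟨Set.disjoint_sdiff_left, ?_, ?_⟩, ⟨Set.disjoint_sdiff_left, ?_, ?_⟩⟩, ?_⟩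
  · rw [e]; exact a.1
  · rw [e]; exact hR
  · rw [e]; exact a.2
  · rw [e]; exact hR
  · rintro J ⟨⟨hd, i1, -⟩, ⟨-, i2, -⟩⟩ hJ x hx
    have hs : I ≤ J ∪ C := by
      rw [← e]; exact Set.union_subset_union_left C hJ
    exact ⟨h.le_of_ge ⟨i1, i2⟩ hs (Or.inl hx), fun hxC => Set.disjoint_left.1 hd hx hxC⟩

/-- If `I₁, I₂` are maximal common independent sets of matroids `M₁, M₂`
on the same finite ground set, then `I₁ \ I₂` and `I₂ \ I₁` are maximal common independent
sets of `M₁' = (M₁ | (I₁ ∪ I₂)) / (I₁ ∩ I₂)` and `M₂' = (M₂ | (I₁ ∪ I₂)) / (I₁ ∩ I₂)`. -/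
theorem stmt1 {α : Type*} [Fintype α] (M₁ M₂ : Matroid α)
    (hE₁ : M₁.E = Set.univ) (hE₂ : M₂.E = Set.univ) {I₁ I₂ : Set α}
    (h₁ : Maximal (fun T => M₁.Indep T ∧ M₂.Indep T) I₁)
    (h₂ : Maximal (fun T => M₁.Indep T ∧ M₂.Indep T) I₂) :
    Maximal (fun T => (((M₁.restrict (I₁ ∪ I₂))).con (I₁ ∩ I₂)).Indep T ∧
        (((M₂.restrict (I₁ ∪ I₂))).con (I₁ ∩ I₂)).Indep T) (I₁ \ I₂) ∧
    Maximal (fun T => (((M₁.restrict (I₁ ∪ I₂))).con (I₁ ∩ I₂)).Indep T ∧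
        (((M₂.restrict (I₁ ∪ I₂))).con (I₁ ∩ I₂)).Indep T) (I₂ \ I₁) := by
  have a := half_aux M₁ M₂ h₁ (C := I₁ ∩ I₂) (R := I₁ ∪ I₂) Set.inter_subset_left Set.subset_union_left
  have b := half_aux M₁ M₂ h₂ (C := I₁ ∩ I₂) (R := I₁ ∪ I₂) Set.inter_subset_right Set.subset_union_right
  have e1 : I₁ \ (I₁ ∩ I₂) = I₁ \ I₂ := by ext x; simp
  have e2 : I₂ \ (I₁ ∩ I₂) = I₂ \ I₁ := by ext x; simp
  rw [e1] at a
  rw [e2] at b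
  exact ⟨a, b⟩
end

section
/- Let M₁ = (S, ℐ₁) and M₂ = (S, ℐ₂) be matroids on the same finite ground set S, let R be a maximum common independent set of M₁ and M₂, and let I be a maximal common independent set of M₁ and M₂ with |I| < |R|. Then there exist elements f ∈ R \ I and e ∈ I \ R such that I ∪ {f} is independent in M₁, I ∪ {f} is dependent in M₂, and (I ∪ {f}) \ {e} is independent in M₂. In particular, (I \ {e}) ∪ {f} is a common independent set of M₁ and M₂ of cardinality |I|. -/
/-- If `R` is a maximum common independent set and `I` a maximal common
independent set with `|I| < |R|`, then there are `f ∈ R \ I` and `e ∈ I \ R` with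
`I ∪ {f}` independent in `M₁`, `I ∪ {f}` dependent in `M₂`, and `(I ∪ {f}) \ {e}`
independent in `M₂`; in particular `(I \ {e}) ∪ {f}` is a common independent set of
cardinality `|I|`. -/
theorem stmt3 {α : Type*} [Fintype α] (M₁ M₂ : Matroid α)
    (hE₁ : M₁.E = Set.univ) (hE₂ : M₂.E = Set.univ) {R I : Set α}
    (hR : (M₁.Indep R ∧ M₂.Indep R) ∧
      ∀ T : Set α, M₁.Indep T → M₂.Indep T → T.ncard ≤ R.ncard)
    (hI : Maximal (fun T => M₁.Indep T ∧ M₂.Indep T) I)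
    (hlt : I.ncard < R.ncard) :
    ∃ f ∈ R \ I, ∃ e ∈ I \ R,
      M₁.Indep (I ∪ {f}) ∧ M₂.Dep (I ∪ {f}) ∧ M₂.Indep ((I ∪ {f}) \ {e}) ∧
      (M₁.Indep ((I \ {e}) ∪ {f}) ∧ M₂.Indep ((I \ {e}) ∪ {f})) ∧
      ((I \ {e}) ∪ {f}).ncard = I.ncard := by
  obtain ⟨⟨hR1, hR2⟩, -⟩ := hR
  obtain ⟨hI1, hI2⟩ := hI.prop
  have henc : I.encard < R.encard := by
    rw [← I.toFinite.cast_ncard_eq, ← R.toFinite.cast_ncard_eq]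
    exact_mod_cast hlt
  obtain ⟨f, hf, hf1⟩ := hI1.augment hR1 henc
  have hfdep : ¬ M₂.Indep (insert f I) := fun h =>
    hf.2 (hI.le_of_ge ⟨hf1, h⟩ (Set.subset_insert f I) (Set.mem_insert f I))
  have hdep : M₂.Dep (insert f I) := ⟨hfdep, by simp [hE₂]⟩
  have hcl : f ∈ M₂.closure I := by
    rw [hI2.mem_closure_iff]
    exact Or.inl hdep
  have hC := hI2.fundCircuit_isCircuit hcl hf.2
  have hns : ¬ M₂.fundCircuit f I ⊆ R := fun h => hC.dep.not_indep (hR2.subset h)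
  obtain ⟨e, heC, heR⟩ := Set.not_subset.1 hns
  have hef : e ≠ f := fun h => heR (h ▸ hf.1)
  have heI : e ∈ I := (M₂.fundCircuit_subset_insert f I heC).resolve_left hef
  have hind := (hI2.mem_fundCircuit_iff hcl hf.2).1 heC
  have heq : (I \ {e}) ∪ {f} = insert f I \ {e} := by
    ext x
    simp only [Set.mem_union, Set.mem_sdiff, Set.mem_singleton_iff, Set.mem_insert_iff]
    grind
  refine ⟨f, hf, e, ⟨heI, heR⟩, ?_⟩
  rw [heq, Set.union_singleton]
  refine ⟨hf1, hdep, hind, ⟨hf1.subset Set.sdiff_subset, hind⟩, ?_⟩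
  rw [Set.ncard_sdiff_singleton_of_mem (Set.mem_insert_of_mem _ heI),
    Set.ncard_insert_of_notMem hf.2]
  rfl
end

section
/- Let M₁ = (S, ℐ₁) and M₂ = (S, ℐ₂) be matroids on the same finite ground set S, let I be a maximal common independent set of M₁ and M₂, and let e ∈ I and f ∈ S \ I be elements such that I ∪ {f} is independent in M₁, I ∪ {f} is dependent in M₂, and (I ∪ {f}) \ {e} is independent in M₂. Then (I \ {e}) ∪ {f} is a common independent set of M₁ and M₂, and every maximal common independent set J of M₁ and M₂ with (I \ {e}) ∪ {f} ⊆ J satisfies |J| ≤ |I| + 1. -/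
theorem aux_card {α : Type*} [Fintype α] (M : Matroid α) {I T : Set α}
    (hI : M.Indep I) (hT : M.Indep T) (h : T ⊆ M.closure I) : T.ncard ≤ I.ncard := by
  have h' := hT.encard_le_eRk_of_subset h
  rw [Matroid.eRk_closure_eq, hI.eRk_eq_encard] at h'
  rw [← (Set.toFinite T).cast_ncard_eq, ← (Set.toFinite I).cast_ncard_eq] at h'
  exact_mod_cast h'

/-- If `I` is a maximal common independent set, `e ∈ I`, `f ∈ S \ I`, with
`I ∪ {f}` independent in `M₁`, dependent in `M₂`, and `(I ∪ {f}) \ {e}` independent in `M₂`,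
then `(I \ {e}) ∪ {f}` is a common independent set, and every maximal common independent
set `J` containing it satisfies `|J| ≤ |I| + 1`. -/
theorem stmt4 {α : Type*} [Fintype α] (M₁ M₂ : Matroid α)
    (hE₁ : M₁.E = Set.univ) (hE₂ : M₂.E = Set.univ) {I : Set α}
    (hI : Maximal (fun T => M₁.Indep T ∧ M₂.Indep T) I)
    {e f : α} (he : e ∈ I) (hf : f ∉ I)
    (h1 : M₁.Indep (I ∪ {f})) (h2 : M₂.Dep (I ∪ {f}))
    (h3 : M₂.Indep ((I ∪ {f}) \ {e})) :
    (M₁.Indep ((I \ {e}) ∪ {f}) ∧ M₂.Indep ((I \ {e}) ∪ {f})) ∧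
    ∀ J : Set α, Maximal (fun T => M₁.Indep T ∧ M₂.Indep T) J →
      (I \ {e}) ∪ {f} ⊆ J → J.ncard ≤ I.ncard + 1 := by
  have hfe : f ≠ e := fun h => hf (h ▸ he)
  have hsub : (I \ {e}) ∪ {f} ⊆ (I ∪ {f}) \ {e} := by
    rintro x (⟨hx, hxe⟩ | rfl)
    · exact ⟨Or.inl hx, hxe⟩
    · exact ⟨Or.inr rfl, hfe⟩
  refine ⟨⟨h1.subset (hsub.trans Set.sdiff_subset), h3.subset hsub⟩, ?_⟩
  intro J hJ hIJ
  obtain ⟨⟨hI1, hI2⟩, hmax⟩ := hI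
  obtain ⟨⟨hJ1, hJ2⟩, -⟩ := hJ
  have hfJ : f ∈ J := hIJ (Or.inr rfl)
  have heJ : e ∉ J := by
    intro heJ
    refine h2.not_indep (hJ2.subset ?_)
    rintro x (hx | hx)
    · by_cases hxe : x = e
      · exact hxe ▸ heJ
      · exact hIJ (Or.inl ⟨hx, hxe⟩)
    · exact hIJ (Or.inr hx)
  have hI1s : I ⊆ M₁.closure I := M₁.subset_closure I
  have hI2s : I ⊆ M₂.closure I := M₂.subset_closure I
  have hfc : f ∈ M₂.closure I := by
    rw [hI2.mem_closure_iff]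
    left
    rwa [Set.union_singleton] at h2
  have hcard : ((I \ {e}) ∪ {f}).ncard = I.ncard := by
    rw [Set.union_singleton, Set.ncard_insert_of_notMem (fun h => hf h.1),
      Set.ncard_sdiff_singleton_add_one he]
  have key : J \ {f} ⊆ M₁.closure I := by
    rintro x ⟨hxJ, hxf⟩
    by_cases hxI : x ∈ I
    · exact hI1s hxI
    by_contra hx1
    have hx1' : M₁.Indep (insert x I) := by
      rw [hI1.insert_indep_iff]; left; exact ⟨by simp [hE₁], hx1⟩
    by_cases hx2 : x ∈ M₂.closure I
    · have hs : insert x ((I \ {e}) ∪ {f}) ⊆ M₂.closure I := by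
        rintro y (rfl | hy | rfl)
        · exact hx2
        · exact hI2s hy.1
        · exact hfc
      have := aux_card M₂ hI2 (hJ2.subset (Set.insert_subset hxJ hIJ)) hs
      rw [Set.ncard_insert_of_notMem (by rintro (h | h); exacts [hxI h.1, hxf h]), hcard] at this
      omega
    · have hx2' : M₂.Indep (insert x I) := by
        rw [hI2.insert_indep_iff]; left; exact ⟨by simp [hE₂], hx2⟩
      exact hxI (hmax ⟨hx1', hx2'⟩ (Set.subset_insert x I) (Set.mem_insert x I))
  have := aux_card M₁ hI1 (hJ1.subset Set.sdiff_subset) key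
  have h5 := Set.ncard_sdiff_singleton_add_one hfJ
  omega
end

section
/- Let M = (S, ℐ) be a matroid, let I be an independent set of M, let e ∈ I, and let f₁ and f₂ be two distinct elements of S \ I such that, for each i ∈ {1, 2}, the set I ∪ {fᵢ} is dependent in M and the set (I ∪ {fᵢ}) \ {e} is independent in M. Then (I \ {e}) ∪ {f₁, f₂} is dependent in M. (Applied to M₁ this gives the out-neighbor lemma and applied to M₂ the in-neighbor lemma for the exchange digraph D(I).) -/
/-- If `I` is independent in `M`, `e ∈ I`, and `f₁ ≠ f₂` are elements of
`S \ I` such that each `I ∪ {fᵢ}` is dependent and each `(I ∪ {fᵢ}) \ {e}` is independent,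
then `(I \ {e}) ∪ {f₁, f₂}` is dependent in `M`. -/
theorem stmt5 {α : Type*} [Fintype α] (M : Matroid α) (hE : M.E = Set.univ)
    {I : Set α} (hI : M.Indep I) {e f₁ f₂ : α}
    (he : e ∈ I) (hf₁ : f₁ ∉ I) (hf₂ : f₂ ∉ I) (hne : f₁ ≠ f₂)
    (hd₁ : M.Dep (I ∪ {f₁})) (hi₁ : M.Indep ((I ∪ {f₁}) \ {e}))
    (hd₂ : M.Dep (I ∪ {f₂})) (hi₂ : M.Indep ((I ∪ {f₂}) \ {e})) :
    M.Dep ((I \ {e}) ∪ {f₁, f₂}) := by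
  rw [← Matroid.not_indep_iff (by rw [hE]; exact Set.subset_univ _)]
  intro hJ
  have hlt : I.encard < ((I \ {e}) ∪ {f₁, f₂}).encard := by
    rw [Set.encard_union_eq, Set.encard_pair hne, ← Set.encard_sdiff_singleton_add_one he]
    · have hfin : (I \ {e}).Finite := Set.toFinite _
      rw [hfin.encard_eq_coe_toFinset_card]
      norm_cast
      omega
    · rw [Set.disjoint_left]
      rintro x ⟨hx, -⟩ (rfl | rfl)
      · exact hf₁ hx
      · exact hf₂ hx
  obtain ⟨x, ⟨hx, hxI⟩, hins⟩ := hI.augment hJ hlt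
  rcases hx with hx | rfl | rfl
  · exact hxI hx.1
  · rw [Set.union_singleton] at hd₁
    exact hd₁.not_indep hins
  · rw [Set.union_singleton] at hd₂
    exact hd₂.not_indep hins
end

section
/- Let 𝐌 = (S, ℐ) be a matroid and G = (S, E) a finite simple graph on its ground set. Let R be a maximum matching of (𝐌, G) and let M be a maximal matching of (𝐌, G) with |M| < |R|. Then there exist edges e ∈ M \ R and f ∈ R \ M such that (M \ {e}) ∪ {f} is a matching of (𝐌, G), and moreover every maximal matching of (𝐌, G) containing (M \ {e}) ∪ {f} has cardinality at most |M| + 2. -/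
/-- A set `F` of edges is a matching of the pair `(M, G)` if its edges are edges of `G`,
pairwise vertex-disjoint, and the set of endpoints of its edges is independent in `M`. -/
def MatroidMatching {α : Type*} (M : Matroid α) (G : SimpleGraph α)
    (F : Set (Sym2 α)) : Prop :=
  F ⊆ G.edgeSet ∧ (F.Pairwise fun e f => ∀ v : α, v ∈ e → v ∉ f) ∧
    M.Indep {v : α | ∃ e ∈ F, v ∈ e}

theorem mm_ncard {α : Type*} [Fintype α] {M : Matroid α} {G : SimpleGraph α}
    {F : Set (Sym2 α)} (h : MatroidMatching M G F) :
    {v : α | ∃ e ∈ F, v ∈ e}.ncard = 2 * F.ncard := by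
  classical
  have hs : {v : α | ∃ e ∈ F, v ∈ e} = ((F.toFinset.biUnion fun e => e.toFinset : Finset α) : Set α) := by
    ext v; simp
  rw [hs, Set.ncard_coe_finset, Finset.card_biUnion]
  · rw [Finset.sum_congr rfl (g := fun _ => 2)]
    · rw [Set.ncard_eq_toFinset_card' F]; simp [mul_comm]
    · intro e he
      exact Sym2.card_toFinset_of_not_isDiag _ (G.not_isDiag_of_mem_edgeSet (h.1 (by simpa using he)))
  · intro e he f hf hne
    rw [Function.onFun, Finset.disjoint_left]
    intro v hv hv'
    exact h.2.1 (by simpa using he) (by simpa using hf) hne v (by simpa using hv) (by simpa using hv')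

theorem mm_bound {α : Type*} [Fintype α] {M : Matroid α} (hE : M.E = Set.univ)
    {G : SimpleGraph α} {M₀ : Set (Sym2 α)}
    (hM : Maximal (MatroidMatching M G) M₀) {e : Sym2 α} (he : e ∈ M₀)
    {N : Set (Sym2 α)} (hN : MatroidMatching M G N) (hsub : M₀ \ {e} ⊆ N) :
    N.ncard ≤ M₀.ncard + 1 := by
  classical
  set A : Set α := {v : α | ∃ e ∈ M₀, v ∈ e} with hA
  set V : Set α := {v : α | ∃ e ∈ N, v ∈ e} with hV
  set A' : Set α := {v : α | ∃ g ∈ M₀ \ {e}, v ∈ g} with hA'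
  have hAi : M.Indep A := hM.prop.2.2
  have hVi : M.Indep V := hN.2.2
  obtain ⟨B, hB, hAB⟩ := hAi.subset_isBasis_of_subset (X := A ∪ V) Set.subset_union_left
    (by rw [hE]; exact Set.subset_univ _)
  obtain ⟨B', hB', hVB'⟩ := hVi.subset_isBasis_of_subset (X := A ∪ V) Set.subset_union_right
    (by rw [hE]; exact Set.subset_univ _)
  have hcard : V.ncard ≤ B.ncard := by
    have hbb : B.ncard = B'.ncard := by simp only [Set.ncard_def, hB.encard_eq_encard hB']
    rw [hbb]
    exact Set.ncard_le_ncard hVB'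
  have hA'A : A' ⊆ A := by
    rintro v ⟨g, hg, hv⟩; exact ⟨g, hg.1, hv⟩
  have hA'V : A' ⊆ V := by
    rintro v ⟨g, hg, hv⟩; exact ⟨g, hsub hg, hv⟩
  have h1 : (B \ A).ncard + A.ncard = B.ncard := Set.ncard_sdiff_add_ncard_of_subset hAB
  have hBV : B \ A ⊆ V := by
    rintro v ⟨hv, hv'⟩
    exact (hB.subset hv).resolve_left hv'
  have h2 : (V \ (B \ A)).ncard + (B \ A).ncard = V.ncard := Set.ncard_sdiff_add_ncard_of_subset hBV
  have hAA : A.ncard ≤ A'.ncard + 2 := by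
    have : A ⊆ A' ∪ (e.toFinset : Set α) := by
      rintro v ⟨g, hg, hv⟩
      by_cases hge : g = e
      · right; subst hge; simpa using hv
      · left; exact ⟨g, ⟨hg, hge⟩, hv⟩
    refine (Set.ncard_le_ncard this).trans ((Set.ncard_union_le _ _).trans ?_)
    rw [Set.ncard_coe_finset, Sym2.card_toFinset]
    split_ifs <;> omega
  have h3 : ((V \ (B \ A)) \ A').ncard + A'.ncard = (V \ (B \ A)).ncard :=
    Set.ncard_sdiff_add_ncard_of_subset fun v hv => ⟨hA'V hv, fun h => h.2 (hA'A hv)⟩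
  have hY : ((V \ (B \ A)) \ A').ncard ≤ 2 := by omega
  have hhit : ∀ g ∈ N \ (M₀ \ {e}), ∃ v ∈ g, v ∈ (V \ (B \ A)) \ A' := by
    rintro g ⟨hg, hgM⟩
    by_contra! hcon
    have hnA' : ∀ v ∈ g, v ∉ A' := by
      rintro v hv ⟨k, hk, hvk⟩
      exact hN.2.1 hg (hsub hk) (fun h => hgM (h ▸ hk)) v hv hvk
    have hBA : ∀ v ∈ g, v ∈ B \ A := by
      intro v hv
      by_contra hh
      exact hcon v hv ⟨⟨⟨g, hg, hv⟩, hh⟩, hnA' v hv⟩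
    have hmat : MatroidMatching M G (insert g M₀) := by
      refine ⟨Set.insert_subset (hN.1 hg) hM.prop.1, ?_, hB.indep.subset ?_⟩
      · rintro a (rfl | ha) b (rfl | hb) hne v hva hvb
        · exact hne rfl
        · exact (hBA v hva).2 ⟨b, hb, hvb⟩
        · exact (hBA v hvb).2 ⟨a, ha, hva⟩
        · exact hM.prop.2.1 ha hb hne v hva hvb
      · rintro v ⟨k, (rfl | hk), hv⟩
        · exact (hBA v hv).1
        · exact hAB ⟨k, hk, hv⟩
    have hgM0 : g ∈ M₀ := hM.le_of_ge hmat (Set.subset_insert _ _) (Set.mem_insert _ _)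
    have hx := Sym2.out_fst_mem g
    exact (hBA _ hx).2 ⟨g, hgM0, hx⟩
  haveI : Nonempty α := ⟨(Quot.out e).1⟩
  choose! φ hφ1 hφ2 using hhit
  have h4 : (N \ (M₀ \ {e})).ncard ≤ ((V \ (B \ A)) \ A').ncard := by
    refine Set.ncard_le_ncard_of_injOn φ hφ2 ?_
    intro a ha b hb hab
    by_contra hne
    exact hN.2.1 ha.1 hb.1 hne _ (hφ1 a ha) (hab ▸ hφ1 b hb)
  have h5 : (N \ (M₀ \ {e})).ncard + (M₀ \ {e}).ncard = N.ncard :=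
    Set.ncard_sdiff_add_ncard_of_subset hsub
  have h6 := Set.ncard_sdiff_singleton_add_one he
  omega

theorem mm_exch {α : Type*} [Fintype α] {M : Matroid α} (hE : M.E = Set.univ)
    {G : SimpleGraph α} {R M₀ : Set (Sym2 α)}
    (hR : MatroidMatching M G R)
    (hM : Maximal (MatroidMatching M G) M₀)
    (hlt : M₀.ncard < R.ncard) :
    ∃ e ∈ M₀ \ R, ∃ f ∈ R \ M₀, MatroidMatching M G ((M₀ \ {e}) ∪ {f}) := by
  classical
  have hcA := mm_ncard hM.prop
  have hcB := mm_ncard hR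
  set A : Set α := {v : α | ∃ e ∈ M₀, v ∈ e} with hA
  set B : Set α := {v : α | ∃ e ∈ R, v ∈ e} with hB
  have hAi : M.Indep A := hM.prop.2.2
  have hBi : M.Indep B := hR.2.2
  obtain ⟨x, ⟨hxB, hxA⟩, hx⟩ := hAi.augment hBi (by
    rw [← (Set.toFinite A).cast_ncard_eq, ← (Set.toFinite B).cast_ncard_eq]
    exact_mod_cast (by omega))
  obtain ⟨f, hfR, hxf⟩ := hxB
  obtain ⟨y, rfl⟩ := Sym2.mem_iff_exists.1 hxf
  have hfM : s(x, y) ∉ M₀ := fun h => hxA ⟨_, h, hxf⟩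
  have hyf : y ∈ s(x, y) := Sym2.mem_mk_right x y
  have hyB : y ∈ B := ⟨_, hfR, hyf⟩
  -- general pairwise fact
  have key : ∀ (e : Sym2 α) (J : Set α), M.Indep J → x ∈ J → y ∈ J →
      (∀ g ∈ M₀, g ≠ e → ∀ v ∈ g, v ∈ J) → (∀ g ∈ M₀, g ≠ e → y ∉ g) →
      MatroidMatching M G ((M₀ \ {e}) ∪ {s(x, y)}) := by
    intro e J hJ hxJ hyJ h1 h2
    have hdis : ∀ g ∈ M₀, g ≠ e → ∀ v, v ∈ g → v ∉ s(x, y) := by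
      intro g hg hge v hv hv'
      rcases Sym2.mem_iff.1 hv' with rfl | rfl
      · exact hxA ⟨g, hg, hv⟩
      · exact h2 g hg hge hv
    refine ⟨?_, ?_, hJ.subset ?_⟩
    · rintro g (hg | rfl)
      · exact hM.prop.1 hg.1
      · exact hR.1 hfR
    · rintro a (ha | rfl) b (hb | rfl) hne v hva hvb
      · exact hM.prop.2.1 ha.1 hb.1 hne v hva hvb
      · exact hdis a ha.1 ha.2 v hva hvb
      · exact hdis b hb.1 hb.2 v hvb hva
      · exact hne rfl
    · rintro v ⟨g, (hg | rfl), hv⟩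
      · exact h1 g hg.1 hg.2 v hv
      · rcases Sym2.mem_iff.1 hv with rfl | rfl <;> assumption
  by_cases hyA : y ∈ A
  · obtain ⟨e, heM, hye⟩ := id hyA
    refine ⟨e, ⟨heM, fun heR => ?_⟩, s(x, y), ⟨hfR, hfM⟩, ?_⟩
    · exact hR.2.1 heR hfR (fun h => hfM (h ▸ heM)) y hye hyf
    · refine key e _ hx (Set.mem_insert _ _) (Set.mem_insert_of_mem _ hyA)
        (fun g hg _ v hv => Set.mem_insert_of_mem _ ⟨g, hg, hv⟩) ?_
      intro g hg hge hyg
      exact hM.prop.2.1 hg heM hge y hyg hye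
  · have hdep : ¬ M.Indep (insert y (insert x A)) := by
      intro hind
      have h := key s(x, y) _ hind (by simp) (by simp)
        (fun g hg _ v hv => by right; right; exact ⟨g, hg, hv⟩) (fun g hg _ hv => hyA ⟨g, hg, hv⟩)
      rw [Set.sdiff_singleton_eq_self hfM] at h
      exact hfM (hM.le_of_ge h Set.subset_union_left (Or.inr rfl))
    have hyx : y ∉ insert x A := fun h => hdep (by rwa [Set.insert_eq_of_mem h])
    have hycl : y ∈ M.closure (insert x A) := by
      by_contra hc
      exact hdep ((hx.notMem_closure_iff_of_notMem hyx (by rw [hE]; trivial)).1 hc)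
    have hC := hx.fundCircuit_isCircuit hycl hyx
    have hnsub : ¬ M.fundCircuit y (insert x A) ⊆ B := fun h => hC.dep.not_indep (hBi.subset h)
    obtain ⟨c, hcC, hcB⟩ := Set.not_subset.1 hnsub
    have hcx : c ≠ x := fun h => hcB (h ▸ ⟨_, hfR, hxf⟩)
    have hcy : c ≠ y := fun h => hcB (h ▸ hyB)
    have hcA' : c ∈ A := by
      have := M.fundCircuit_subset_insert y (insert x A) hcC
      simpa [hcx, hcy] using this
    obtain ⟨e, heM, hce⟩ := id hcA'
    refine ⟨e, ⟨heM, fun heR => hcB ⟨e, heR, hce⟩⟩, s(x, y), ⟨hfR, hfM⟩, ?_⟩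
    have hind := (hx.mem_fundCircuit_iff hycl hyx).1 hcC
    refine key e _ hind ⟨by simp, hcx.symm⟩ ⟨by simp, hcy.symm⟩ ?_ (fun g hg _ hv => hyA ⟨g, hg, hv⟩)
    intro g hg hge v hv
    refine ⟨Or.inr (Or.inr ⟨g, hg, hv⟩), ?_⟩
    rintro rfl
    exact hM.prop.2.1 hg heM hge _ hv hce

/-- If `R` is a maximum matching of `(M, G)` and `M₀` a maximal matching with
`|M₀| < |R|`, then there are edges `e ∈ M₀ \ R` and `f ∈ R \ M₀` such that
`(M₀ \ {e}) ∪ {f}` is a matching of `(M, G)` and every maximal matching containing it has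
cardinality at most `|M₀| + 2`. -/
theorem stmt8 {α : Type*} [Fintype α] (M : Matroid α) (hE : M.E = Set.univ)
    (G : SimpleGraph α) {R M₀ : Set (Sym2 α)}
    (hR : MatroidMatching M G R ∧
      ∀ F : Set (Sym2 α), MatroidMatching M G F → F.ncard ≤ R.ncard)
    (hM : Maximal (MatroidMatching M G) M₀)
    (hlt : M₀.ncard < R.ncard) :
    ∃ e ∈ M₀ \ R, ∃ f ∈ R \ M₀,
      MatroidMatching M G ((M₀ \ {e}) ∪ {f}) ∧
      ∀ N : Set (Sym2 α), Maximal (MatroidMatching M G) N →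
        (M₀ \ {e}) ∪ {f} ⊆ N → N.ncard ≤ M₀.ncard + 2 := by
  obtain ⟨e, he, f, hf, h⟩ := mm_exch hE hR.1 hM hlt
  refine ⟨e, he, f, hf, h, fun N hN hsub => ?_⟩
  have := mm_bound hE hM he.1 hN.prop (Set.subset_union_left.trans hsub)
  omega
end

section
/- Let 𝐌 = (S, ℐ) be a matroid and G = (S, E) a finite simple graph on its ground set. Let R be a maximum matching of (𝐌, G) and let M be a maximal matching of (𝐌, G) with |M| < |R|. Then there exists a maximal matching M' of (𝐌, G) such that |M| ≤ |M'|, |M △ M'| ≤ 4, and either |R △ M'| < |R △ M| or |M| < |M'|. -/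
open scoped symmDiff

def mmV {α : Type*} (F : Set (Sym2 α)) : Set α := {v : α | ∃ e ∈ F, v ∈ e}

lemma mmV_ncard {α : Type*} [Fintype α] {M : Matroid α} {G : SimpleGraph α}
    {F : Set (Sym2 α)} (h : MatroidMatching M G F) : (mmV F).ncard = 2 * F.ncard := by
  classical
  have e1 : mmV F = ((F.toFinite.toFinset.biUnion fun e => e.toFinset : Finset α) : Set α) := by
    ext v
    simp [mmV]
  rw [e1, Set.ncard_coe_finset, Finset.card_biUnion]
  · rw [Finset.sum_congr rfl (g := fun _ => 2)]
    · rw [Finset.sum_const, Set.ncard_eq_toFinset_card F F.toFinite, smul_eq_mul, mul_comm]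
    · intro e he
      apply Sym2.card_toFinset_of_not_isDiag
      exact G.not_isDiag_of_mem_edgeSet (h.1 (by simpa using he))
  · intro e he f hf hef
    refine Finset.disjoint_left.2 ?_
    intro v hv hv'
    exact h.2.1 (by simpa using he) (by simpa using hf) hef v
      (Sym2.mem_toFinset.1 hv) (Sym2.mem_toFinset.1 hv')

lemma mm_eq {α : Type*} {M : Matroid α} {G : SimpleGraph α}
    {F : Set (Sym2 α)} (h : MatroidMatching M G F) {e f : Sym2 α} (he : e ∈ F) (hf : f ∈ F)
    {v : α} (hv : v ∈ e) (hv' : v ∈ f) : e = f := by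
  by_contra hne
  exact h.2.1 he hf hne v hv hv'

lemma mm_insert {α : Type*} {M : Matroid α} {G : SimpleGraph α}
    {F : Set (Sym2 α)} (h : MatroidMatching M G F) {f : Sym2 α} (hf : f ∈ G.edgeSet)
    (hd : ∀ v ∈ f, v ∉ mmV F) {J : Set α} (hJ : M.Indep J) (hFJ : mmV F ⊆ J)
    (hfJ : ∀ v ∈ f, v ∈ J) : MatroidMatching M G (insert f F) := by
  refine ⟨Set.insert_subset hf h.1, ?_, hJ.subset ?_⟩
  · rintro a (rfl | ha) b (rfl | hb) hab v hva hvb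
    · exact hab rfl
    · exact hd v hva ⟨b, hb, hvb⟩
    · exact hd v hvb ⟨a, ha, hva⟩
    · exact hab (mm_eq h ha hb hva hvb)
  · rintro v ⟨a, (rfl | ha), hva⟩
    · exact hfJ v hva
    · exact hFJ ⟨a, ha, hva⟩

lemma mm_sub {α : Type*} {M : Matroid α} {G : SimpleGraph α}
    {F F' : Set (Sym2 α)} (h : MatroidMatching M G F) (hs : F' ⊆ F) : MatroidMatching M G F' :=
  ⟨hs.trans h.1, h.2.1.mono hs, h.2.2.subset (by rintro v ⟨e, he, hv⟩; exact ⟨e, hs he, hv⟩)⟩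

lemma mm_ext {α : Type*} [Fintype α] {M : Matroid α} (hE : M.E = Set.univ)
    {G : SimpleGraph α} {M₀ M' : Set (Sym2 α)} (hM : Maximal (MatroidMatching M G) M₀)
    (hM' : MatroidMatching M G M') {e : Sym2 α} (hs : M₀ \ {e} ⊆ M') :
    (M' \ M₀).ncard ≤ 2 := by
  classical
  obtain ⟨J, hJ, hVJ⟩ := hM.prop.2.2.subset_isBasis_of_subset
    (X := mmV M₀ ∪ mmV M') Set.subset_union_left (by rw [hE]; exact Set.subset_univ _)
  change mmV M₀ ⊆ J at hVJ
  have c1 : (mmV M').ncard ≤ J.ncard := by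
    have := (Matroid.Indep.encard_le_eRk_of_subset (M := M) (I := mmV M') hM'.2.2
      (Set.subset_union_right (s := mmV M₀))).trans_eq hJ.eRk_eq_encard
    rw [← (Set.toFinite (mmV M')).cast_ncard_eq, ← (Set.toFinite J).cast_ncard_eq] at this
    exact_mod_cast this
  have c2 : (mmV M' \ J).ncard ≤ (J \ mmV M').ncard := by
    have h1 := Set.ncard_inter_add_ncard_sdiff_eq_ncard (mmV M') J
    have h2 := Set.ncard_inter_add_ncard_sdiff_eq_ncard J (mmV M')
    rw [Set.inter_comm] at h2
    omega
  have c3 : J \ mmV M' ⊆ {v | v ∈ e} \ mmV M' := by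
    rintro v ⟨hv, hv'⟩
    refine ⟨?_, hv'⟩
    rcases hJ.subset hv with ⟨g, hg, hvg⟩ | h
    · by_cases hge : g = e
      · exact hge ▸ hvg
      · exact absurd ⟨g, hs ⟨hg, hge⟩, hvg⟩ hv'
    · exact absurd h hv'
  have c3' := Set.ncard_le_ncard c3
  have c4 : ({v | v ∈ e} : Set α).ncard ≤ 2 := by
    induction e with | _ a b
    have : ({v | v ∈ s(a, b)} : Set α) = {a, b} := by ext; simp
    rw [this]
    exact (Set.ncard_insert_le a {b}).trans (by rw [Set.ncard_singleton])
  have c5 := Set.ncard_inter_add_ncard_sdiff_eq_ncard {v | v ∈ e} (mmV M')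
  have c6 := Set.ncard_union_le (mmV M' \ J) ({v | v ∈ e} ∩ mmV M')
  have key : ∀ f ∈ M' \ M₀, ∃ v ∈ f, v ∈ (mmV M' \ J) ∪ ({v | v ∈ e} ∩ mmV M') := by
    rintro f ⟨hf, hf0⟩
    by_contra! hcon
    have hfJ : ∀ v ∈ f, v ∈ J := by
      intro v hv
      by_contra hvJ
      exact hcon v hv (Or.inl ⟨⟨f, hf, hv⟩, hvJ⟩)
    have hd : ∀ v ∈ f, v ∉ mmV M₀ := by
      rintro v hv ⟨g, hg, hvg⟩
      by_cases hge : g = e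
      · exact hcon v hv (Or.inr ⟨hge ▸ hvg, ⟨f, hf, hv⟩⟩)
      · have := mm_eq hM' hf (hs ⟨hg, hge⟩) hv hvg
        exact hf0 (this ▸ hg)
    have := mm_insert hM.prop (hM'.1 hf) hd hJ.indep hVJ hfJ
    exact hf0 (hM.le_of_ge this (Set.subset_insert _ _) (Set.mem_insert _ _))
  rcases isEmpty_or_nonempty α with hα | hα
  · have : M' \ M₀ = ∅ := by
      ext f
      simp only [Set.mem_empty_iff_false, iff_false]
      intro hf
      obtain ⟨v, -⟩ := key f hf
      exact hα.elim v
    simp [this]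
  have key' : ∀ f : Sym2 α, ∃ v, f ∈ M' \ M₀ →
      v ∈ f ∧ v ∈ (mmV M' \ J) ∪ ({v | v ∈ e} ∩ mmV M') := by
    intro f
    by_cases hf : f ∈ M' \ M₀
    · obtain ⟨v, h⟩ := key f hf
      exact ⟨v, fun _ => h⟩
    · exact ⟨Classical.arbitrary α, fun h => absurd h hf⟩
  choose φ hφ using key'
  have := Set.ncard_le_ncard_of_injOn (s := M' \ M₀) φ (fun f hf => (hφ f hf).2) (by
    intro f hf g hg hfg
    exact mm_eq hM' hf.1 hg.1 (hφ f hf).1 (hfg ▸ (hφ g hg).1))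
  omega

lemma mm_swap {α : Type*} [Fintype α] {M : Matroid α} (hE : M.E = Set.univ)
    {G : SimpleGraph α} {R M₀ : Set (Sym2 α)} (hR : MatroidMatching M G R)
    (hM : Maximal (MatroidMatching M G) M₀) (hlt : M₀.ncard < R.ncard) :
    ∃ e ∈ M₀, e ∉ R ∧ ∃ f ∈ R, f ∉ M₀ ∧ MatroidMatching M G (insert f (M₀ \ {e})) := by
  have hc : (mmV M₀).encard < (mmV R).encard := by
    rw [← (Set.toFinite (mmV M₀)).cast_ncard_eq, ← (Set.toFinite (mmV R)).cast_ncard_eq,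
      mmV_ncard hM.prop, mmV_ncard hR]
    exact_mod_cast (by omega : 2 * M₀.ncard < 2 * R.ncard)
  have hI : M.Indep (mmV M₀) := hM.prop.2.2
  have hIR : M.Indep (mmV R) := hR.2.2
  obtain ⟨x, ⟨⟨f, hfR, hxf⟩, hx0⟩, hxI⟩ := hI.augment hIR hc
  obtain ⟨y, rfl⟩ := hxf
  have hf0 : s(x, y) ∉ M₀ := fun h => hx0 ⟨_, h, by simp⟩
  have hsub : ∀ e, mmV (M₀ \ {e}) ⊆ mmV M₀ := by
    rintro e v ⟨g, hg, hv⟩; exact ⟨g, hg.1, hv⟩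
  have hnot : ∀ e ∈ M₀, ∀ v ∈ e, v ∉ mmV (M₀ \ {e}) := by
    rintro e he v hv ⟨g, hg, hvg⟩
    exact hg.2 (mm_eq hM.prop hg.1 he hvg hv)
  by_cases hy : y ∈ mmV M₀
  · obtain ⟨e, he, hye⟩ := hy
    refine ⟨e, he, ?_, s(x, y), hfR, hf0, ?_⟩
    · intro heR
      have := mm_eq hR heR hfR hye (by simp)
      exact hf0 (this ▸ he)
    · refine mm_insert (mm_sub hM.prop Set.sdiff_subset) (hR.1 hfR) ?_ hxI ?_ ?_
      · intro v hv
        rcases Sym2.mem_iff.1 hv with rfl | rfl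
        · exact fun h => hx0 (hsub e h)
        · exact hnot e he _ hye
      · exact (hsub e).trans (Set.subset_insert _ _)
      · intro v hv
        rcases Sym2.mem_iff.1 hv with rfl | rfl
        · exact Set.mem_insert _ _
        · exact Set.mem_insert_of_mem _ ⟨e, he, hye⟩
  · have hxy : x ≠ y := by
      have := hR.1 hfR
      rw [SimpleGraph.mem_edgeSet] at this
      exact this.ne
    have hy' : y ∉ insert x (mmV M₀) := by
      rintro (h | h)
      · exact hxy h.symm
      · exact hy h
    have hcl : y ∈ M.closure (insert x (mmV M₀)) := by
      by_contra hcl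
      rw [hxI.notMem_closure_iff_of_notMem hy' (by rw [hE]; trivial)] at hcl
      have := mm_insert hM.prop (hR.1 hfR) (by
        intro v hv
        rcases Sym2.mem_iff.1 hv with rfl | rfl
        · exact hx0
        · exact hy) hcl (fun v hv => Or.inr (Or.inr hv)) (by
        intro v hv
        rcases Sym2.mem_iff.1 hv with rfl | rfl
        · exact Or.inr (Or.inl rfl)
        · exact Or.inl rfl)
      exact hf0 (hM.le_of_ge this (Set.subset_insert _ _) (Set.mem_insert _ _))
    have hC := hxI.fundCircuit_isCircuit hcl hy'
    have hns : ¬ M.fundCircuit y (insert x (mmV M₀)) ⊆ mmV R :=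
      fun h => hC.dep.not_indep (hIR.subset h)
    obtain ⟨z, hzC, hzR⟩ := Set.not_subset.1 hns
    have hzi := (hxI.mem_fundCircuit_iff hcl hy').1 hzC
    have hzx : z ≠ x := by rintro rfl; exact hzR ⟨_, hfR, by simp⟩
    have hzy : z ≠ y := by rintro rfl; exact hzR ⟨_, hfR, by simp⟩
    have hz0 : z ∈ mmV M₀ := by
      rcases M.fundCircuit_subset_insert _ _ hzC with h | h | h
      · exact absurd h hzy
      · exact absurd h hzx
      · exact h
    obtain ⟨e, he, hze⟩ := hz0
    refine ⟨e, he, fun h => hzR ⟨e, h, hze⟩, s(x, y), hfR, hf0, ?_⟩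
    refine mm_insert (mm_sub hM.prop Set.sdiff_subset) (hR.1 hfR) ?_ hzi ?_ ?_
    · intro v hv
      rcases Sym2.mem_iff.1 hv with rfl | rfl
      · exact fun h => hx0 (hsub e h)
      · exact fun h => hy (hsub e h)
    · intro v hv
      refine ⟨Or.inr (Or.inr (hsub e hv)), ?_⟩
      rintro rfl
      exact hnot e he _ hze hv
    · intro v hv
      rcases Sym2.mem_iff.1 hv with rfl | rfl
      · exact ⟨Or.inr (Or.inl rfl), hzx.symm⟩
      · exact ⟨Or.inl rfl, hzy.symm⟩

theorem stmt9 {α : Type*} [Fintype α] (M : Matroid α) (hE : M.E = Set.univ)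
    (G : SimpleGraph α) {R M₀ : Set (Sym2 α)}
    (hR : MatroidMatching M G R ∧
      ∀ F : Set (Sym2 α), MatroidMatching M G F → F.ncard ≤ R.ncard)
    (hM : Maximal (MatroidMatching M G) M₀)
    (hlt : M₀.ncard < R.ncard) :
    ∃ M' : Set (Sym2 α), Maximal (MatroidMatching M G) M' ∧
      M₀.ncard ≤ M'.ncard ∧ (M₀ ∆ M').ncard ≤ 4 ∧
      ((R ∆ M').ncard < (R ∆ M₀).ncard ∨ M₀.ncard < M'.ncard) := by
  obtain ⟨e, he, heR, f, hfR, hf0, hN⟩ := mm_swap hE hR.1 hM hlt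
  obtain ⟨M', hNM, hM'⟩ := (Set.toFinite {F | MatroidMatching M G F}).exists_le_maximal hN
  replace hNM : insert f (M₀ \ {e}) ⊆ M' := hNM
  have hM'' : Maximal (MatroidMatching M G) M' := hM'
  have hNc : (insert f (M₀ \ {e})).ncard = M₀.ncard := by
    rw [Set.ncard_insert_of_notMem (fun h => hf0 h.1), Set.ncard_sdiff_singleton_add_one he]
  have hle := Set.ncard_le_ncard hNM
  have h2 := mm_ext hE hM hM''.prop ((Set.subset_insert f _).trans hNM)
  refine ⟨M', hM'', by omega, ?_, ?_⟩
  · have h1 : M₀ \ M' ⊆ {e} := by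
      rintro g ⟨hg, hg'⟩
      by_contra hge
      exact hg' (hNM (Or.inr ⟨hg, hge⟩))
    have h1' := Set.ncard_le_ncard h1
    rw [Set.ncard_singleton] at h1'
    have := Set.ncard_union_le (M₀ \ M') (M' \ M₀)
    rw [Set.symmDiff_def]
    omega
  · by_cases hlt' : M₀.ncard < M'.ncard
    · exact Or.inr hlt'
    · left
      have heq : insert f (M₀ \ {e}) = M' := Set.eq_of_subset_of_ncard_le hNM (by omega)
      have hef : e ≠ f := by rintro rfl; exact hf0 he
      refine Set.ncard_lt_ncard ?_ (Set.toFinite _)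
      refine ⟨?_, fun h => ?_⟩
      · rw [← heq]
        intro g hg
        simp only [Set.mem_symmDiff, Set.mem_insert_iff, Set.mem_sdiff,
          Set.mem_singleton_iff] at hg ⊢
        grind
      · have := h (Or.inr ⟨he, heR⟩ : e ∈ R ∆ M₀)
        rw [← heq] at this
        simp only [Set.mem_symmDiff, Set.mem_insert_iff, Set.mem_sdiff,
          Set.mem_singleton_iff] at this
        grind
end
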